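/- Let m, n ≥ 1 and let W be a social choice function for n agents over the alternatives [m] that is onto and strategyproof. Then for every B ⊊ [m], the social choice function W_{−B} over the alternatives [m]∖B, defined by W_{−B}(R_1,…,R_n) = W(R_1^{+B},…,R_n^{+B}) (whose values lie in [m]∖B), is onto [m]∖B and strategyproof. -/

import Mathlib

/-- A preference over `α`: a strict linear order, given as a relation that is
trichotomous, irreflexive and transitive. `σ.1 a b` means `a` is preferred to `b`. -/
def Pref (α : Type*) : Type _ :=
  {r : α → α → Prop //
    (∀ a b, r a b ∨ a = b ∨ r b a) ∧ (∀ a, ¬ r a a) ∧ (∀ a b c, r a b → r b c → r a c)}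

/-- Restriction `σ_{−B}` of a preference on `Fin m` to the alternatives outside `B`. -/
def restrictPref {m : ℕ} (B : Finset (Fin m)) (σ : Pref (Fin m)) :
    Pref {x : Fin m // x ∉ B} :=
  ⟨fun a b => σ.1 a.1 b.1, by
    obtain ⟨h1, h2, h3⟩ := σ.2
    refine ⟨fun a b => ?_, fun a => h2 a.1, fun a b c => h3 a.1 b.1 c.1⟩
    rcases h1 a.1 b.1 with h | h | h
    · exact Or.inl h
    · exact Or.inr (Or.inl (Subtype.ext h))
    · exact Or.inr (Or.inr h)⟩

/-- Extension `π^{+B}` of a preference `π` on `[m] ∖ B` to all of `Fin m`: it agrees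
with `π` outside `B`, places every alternative outside `B` before every alternative
in `B`, and orders `B` by the natural order on `Fin m`. -/
def extendPref {m : ℕ} (B : Finset (Fin m)) (π : Pref {x : Fin m // x ∉ B}) :
    Pref (Fin m) :=
  ⟨fun a b =>
    if ha : a ∈ B then b ∈ B ∧ a < b
    else if hb : b ∈ B then True
    else π.1 ⟨a, ha⟩ ⟨b, hb⟩, by
    obtain ⟨h1, h2, h3⟩ := π.2
    refine ⟨fun a b => ?_, fun a => ?_, fun a b c => ?_⟩
    · by_cases ha : a ∈ B <;> by_cases hb : b ∈ B <;> simp [ha, hb]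
      · rcases lt_trichotomy a b with h | h | h
        · exact Or.inl h
        · exact Or.inr (Or.inl h)
        · exact Or.inr (Or.inr h)
      · rcases h1 ⟨a, ha⟩ ⟨b, hb⟩ with h | h | h
        · exact Or.inl h
        · exact Or.inr (Or.inl (congrArg Subtype.val h))
        · exact Or.inr (Or.inr h)
    · by_cases ha : a ∈ B <;> simp [ha, h2]
    · by_cases ha : a ∈ B <;> by_cases hb : b ∈ B <;> by_cases hc : c ∈ B <;>
        simp [ha, hb, hc]
      · exact fun hab hbc => lt_trans hab hbc
      · exact fun hab hbc => h3 _ _ _ hab hbc⟩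

/-- Strategyproofness: no agent `i` can, by misreporting its preference as `π`,
obtain an outcome it strictly prefers (under its true preference `R i`). -/
def SCFStrategyproof {n : ℕ} {α : Type*} [DecidableEq (Fin n)]
    (W : (Fin n → Pref α) → α) : Prop :=
  ∀ (R : Fin n → Pref α) (i : Fin n) (π : Pref α),
    ¬ (R i).1 (W (Function.update R i π)) (W R)

/-- `a` is the most preferred element of the preference `σ`. -/
def PrefTop {α : Type*} (σ : Pref α) (a : α) : Prop := ∀ b, b ≠ a → σ.1 a b

/-- Some agent's top alternative is always the outcome of `W`. -/
def SCFDictatorial {n : ℕ} {α : Type*} (W : (Fin n → Pref α) → α) : Prop :=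
  ∃ i : Fin n, ∀ R : Fin n → Pref α, PrefTop (R i) (W R)

/-!
Let the agents switch, one at a time, from a profile electing an element of `S` to one where
everybody ranks `S` above its complement. The outcome never leaves `S`: the first agent to push it
out would do better by reporting the old preference. With `S = [m] ∖ B` this shows that `W_{−B}`
takes values in `[m] ∖ B`, and with `S = {a}` that `W_{−B}` attains every `a ∉ B` in the range
of `W`.
-/

section Strategyproof

variable {n : ℕ} {α : Type*} {W : (Fin n → Pref α) → α}

theorem SCFStrategyproof.update_mem (hW : SCFStrategyproof W) {S : Set α} {R : Fin n → Pref α}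
    (hR : W R ∈ S) (i : Fin n) {π : Pref α} (hπ : ∀ a ∈ S, ∀ b ∉ S, π.1 a b) :
    W (Function.update R i π) ∈ S := by
  by_contra hout
  have hgain : π.1 (W R) (W (Function.update R i π)) := hπ _ hR _ hout
  have hno_gain := hW (Function.update R i π) i (R i)
  rw [Function.update_idem, Function.update_eq_self, Function.update_self] at hno_gain
  exact hno_gain hgain

theorem SCFStrategyproof.mem_of_forall_prefer (hW : SCFStrategyproof W) {S : Set α}
    {R R' : Fin n → Pref α} (hR : W R ∈ S) (hR' : ∀ i, ∀ a ∈ S, ∀ b ∉ S, (R' i).1 a b) :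
    W R' ∈ S := by
  have hswitched (s : Finset (Fin n)) : W (s.piecewise R' R) ∈ S := by
    induction s using Finset.induction_on with
    | empty => rwa [Finset.piecewise_empty]
    | insert i s _ ih =>
      rw [Finset.piecewise_insert]
      exact hW.update_mem ih i (hR' i)
  simpa only [Finset.piecewise_univ] using hswitched Finset.univ

theorem SCFStrategyproof.eq_of_forall_prefTop (hW : SCFStrategyproof W) {a : α}
    (ha : a ∈ Set.range W) {R : Fin n → Pref α} (hR : ∀ i, PrefTop (R i) a) : W R = a := by
  obtain ⟨Q, hQ⟩ := ha
  refine hW.mem_of_forall_prefer (S := {a}) hQ ?_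
  rintro i _ rfl b hb
  exact hR i b hb

end Strategyproof

/-- The preference that ranks alternatives by an injective score in a linear order, lower scores
being preferred. -/
def Pref.ofInjective {α β : Type*} [LinearOrder β] (f : α → β) (hf : Function.Injective f) :
    Pref α :=
  ⟨fun a b => f a < f b,
    fun a b => (lt_trichotomy (f a) (f b)).imp_right (Or.imp_left (@hf a b)),
    fun _ => lt_irrefl _, fun _ _ _ => lt_trans⟩

theorem exists_prefTop {α : Type*} (a : α) : ∃ π : Pref α, PrefTop π a := by
  classical
  let score (x : α) : Bool ×ₗ Cardinal := toLex (decide (x ≠ a), embeddingToCardinal x)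
  have hscore : Function.Injective score := fun x y h =>
    embeddingToCardinal.injective (congrArg (fun p => (ofLex p).2) h)
  refine ⟨Pref.ofInjective score hscore, fun b hb => Prod.Lex.left _ _ ?_⟩
  simp [hb]

section DeleteAlternatives

variable {m n : ℕ} {B : Finset (Fin m)}

theorem extendPref_of_notMem_of_mem (π : Pref {x : Fin m // x ∉ B}) {a b : Fin m}
    (ha : a ∉ B) (hb : b ∈ B) : (extendPref B π).1 a b := by
  simp [extendPref, ha, hb]

theorem extendPref_coe_coe (π : Pref {x : Fin m // x ∉ B}) (a b : {x : Fin m // x ∉ B}) :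
    (extendPref B π).1 a b ↔ π.1 a b := by
  simp [extendPref, a.2, b.2]

theorem PrefTop.extendPref {π : Pref {x : Fin m // x ∉ B}} {a : {x : Fin m // x ∉ B}}
    (h : PrefTop π a) : PrefTop (extendPref B π) (a : Fin m) := by
  intro b hba
  by_cases hb : b ∈ B
  · exact extendPref_of_notMem_of_mem π a.2 hb
  · exact (extendPref_coe_coe π a ⟨b, hb⟩).2 (h _ (Subtype.coe_ne_coe.1 hba))

variable {W : (Fin n → Pref (Fin m)) → Fin m}

theorem SCFStrategyproof.apply_extendPref_notMem (hW : SCFStrategyproof W)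
    (hB : ∃ R, W R ∉ B) (R : Fin n → Pref {x : Fin m // x ∉ B}) :
    W (fun i => extendPref B (R i)) ∉ B := by
  obtain ⟨Q, hQ⟩ := hB
  exact hW.mem_of_forall_prefer (S := {x | x ∉ B}) hQ fun i _ ha _ hb =>
    extendPref_of_notMem_of_mem (R i) ha (not_not.1 hb)

/-- The social choice function `W_{−B}` over `[m] ∖ B`: apply `W` after extending every preference
to `[m]`. An arbitrary `W` may then choose an element of `B`, so a proof that it never does is
an argument of the definition. -/
def deleteAlternatives (W : (Fin n → Pref (Fin m)) → Fin m)
    (hWB : ∀ R : Fin n → Pref {x : Fin m // x ∉ B}, W (fun i => extendPref B (R i)) ∉ B)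
    (R : Fin n → Pref {x : Fin m // x ∉ B}) : {x : Fin m // x ∉ B} :=
  ⟨W fun i => extendPref B (R i), hWB R⟩

variable {hWB : ∀ R : Fin n → Pref {x : Fin m // x ∉ B}, W (fun i => extendPref B (R i)) ∉ B}

theorem SCFStrategyproof.range_deleteAlternatives (hW : SCFStrategyproof W) :
    Set.range (deleteAlternatives W hWB) = Subtype.val ⁻¹' Set.range W := by
  ext a
  constructor
  · rintro ⟨R, rfl⟩
    exact Set.mem_range_self _
  · intro ha
    obtain ⟨π, hπ⟩ := exists_prefTop a
    exact ⟨fun _ => π, Subtype.ext (hW.eq_of_forall_prefTop ha fun _ => hπ.extendPref)⟩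

theorem SCFStrategyproof.deleteAlternatives (hW : SCFStrategyproof W) :
    SCFStrategyproof (deleteAlternatives W hWB) := by
  intro R i π hgain
  have hextend : (fun j => extendPref B (Function.update R i π j)) =
      Function.update (fun j => extendPref B (R j)) i (extendPref B π) :=
    funext (Function.apply_update (fun _ => extendPref B) R i π)
  apply hW (fun j => extendPref B (R j)) i (extendPref B π)
  rw [← hextend]
  exact (extendPref_coe_coe (R i) _ _).2 hgain

end DeleteAlternatives

theorem stmt18_general {m n : ℕ} {W : (Fin n → Pref (Fin m)) → Fin m} (hW : SCFStrategyproof W)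
    {B : Finset (Fin m)} (hB : ∃ R, W R ∉ B) :
    ∃ W' : (Fin n → Pref {x : Fin m // x ∉ B}) → {x : Fin m // x ∉ B},
      (∀ R, (W' R : Fin m) = W (fun i => extendPref B (R i))) ∧
      Set.range W' = Subtype.val ⁻¹' Set.range W ∧ SCFStrategyproof W' :=
  ⟨deleteAlternatives W (hW.apply_extendPref_notMem hB), fun _ => rfl,
    hW.range_deleteAlternatives, hW.deleteAlternatives⟩

theorem stmt18 (m n : ℕ) (hm : 1 ≤ m) (hn : 1 ≤ n)
    (W : (Fin n → Pref (Fin m)) → Fin m)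
    (honto : Function.Surjective W) (hsp : SCFStrategyproof W)
    (B : Finset (Fin m)) (hB : B ⊂ Finset.univ) :
    ∃ W' : (Fin n → Pref {x : Fin m // x ∉ B}) → {x : Fin m // x ∉ B},
      (∀ R, (W' R : Fin m) = W (fun i => extendPref B (R i))) ∧
      Function.Surjective W' ∧ SCFStrategyproof W' := by
  have hout : ∃ R, W R ∉ B := honto.exists.1 (by simpa using Finset.exists_of_ssubset hB)
  obtain ⟨W', hW', hrange, hsp'⟩ := stmt18_general hsp hout
  exact ⟨W', hW', Set.range_eq_univ.1 (by rw [hrange, honto.range_eq, Set.preimage_univ]), hsp'⟩
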